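/- Let H be a finitely generated group, Q a finite-index normal subgroup of H, and φ an automorphism of H. Then the intersection ⋂_{i ∈ ℤ} φⁱ(Q) is a finite-index normal subgroup of H. -/

import Mathlib

/-- For `H` finitely generated, `Q` a finite-index normal subgroup of `H` and `φ` an
automorphism of `H`, the intersection `⋂_{i ∈ ℤ} φⁱ(Q)` is a finite-index normal
subgroup of `H`. -/
theorem stmt_12 {H : Type*} [Group H] [Group.FG H] (Q : Subgroup H)
    (hQn : Q.Normal) (hQfi : Q.FiniteIndex) (φ : MulAut H) :
    (⨅ i : ℤ, Q.map (φ ^ i).toMonoidHom).Normal ∧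
      (⨅ i : ℤ, Q.map (φ ^ i).toMonoidHom).FiniteIndex := by
  constructor
  · exact Subgroup.normal_iInf_normal fun i => hQn.map _ (φ ^ i).surjective
  · obtain ⟨S, hS⟩ := Group.fg_def.mp (inferInstance : Group.FG H)
    haveI : Finite (H ⧸ Q) := Subgroup.finite_quotient_of_finiteIndex
    haveI : Finite (H →* H ⧸ Q) := by
      refine Finite.of_injective (fun (f : H →* H ⧸ Q) (s : S) => f s) ?_
      intro f g h
      exact MonoidHom.eq_of_eqOn_dense hS fun s hs => congrFun h ⟨s, hs⟩
    haveI : (⨅ f : H →* H ⧸ Q, f.ker).FiniteIndex :=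
      Subgroup.finiteIndex_iInf fun f => Subgroup.finiteIndex_ker f
    refine Subgroup.finiteIndex_of_le (H := ⨅ f : H →* H ⧸ Q, f.ker) (le_iInf fun i => ?_)
    refine (iInf_le _ ((QuotientGroup.mk' Q).comp (φ ^ i).symm.toMonoidHom)).trans ?_
    intro x hx
    refine ⟨(φ ^ i).symm x, ?_, (φ ^ i).apply_symm_apply x⟩
    exact (QuotientGroup.eq_one_iff _).mp hx
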